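/- arXiv:2507.15700 — 2 statements merged into one kernel-verified Lean document; each statement's English description precedes it below -/
import Mathlib

section
/- Let (Y, dy) be a σ-finite measure space, let E*, Ê : Y → ℝ be measurable with E*(y) ≥ 0 for all y, let 0 < ξ < log 2 satisfy |E*(y) − Ê(y)| < ξ for all y ∈ Y, and suppose Z* = ∫_Y e^{-E*(y)} dy ∈ (0, ∞). Define the Boltzmann densities q*(y) = e^{-E*(y)}/Z* and q̂(y) = e^{-Ê(y)}/Ẑ with Ẑ = ∫_Y e^{-Ê(y)} dy. Then for every y ∈ Y, |q*(y) − q̂(y)| ≤ 2(e^{ξ} − 1) / ((2 − e^{ξ}) Z*). -/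
open MeasureTheory

/-- With `E* ≥ 0`, `0 < ξ < log 2`, `|E* − Ê| < ξ` pointwise, and
`Z* = ∫ e^{-E*} dμ ∈ (0,∞)`, the Boltzmann densities `q*(y) = e^{-E*(y)}/Z*` and
`q̂(y) = e^{-Ê(y)}/Ẑ` (with `Ẑ = ∫ e^{-Ê} dμ`) satisfy, for every `y`,
`|q*(y) − q̂(y)| ≤ 2(e^ξ − 1)/((2 − e^ξ)·Z*)`. -/
theorem boltzmann_density_perturbation
    {Y : Type*} [MeasurableSpace Y] (μ : Measure Y) [SigmaFinite μ]
    (Estar Ehat : Y → ℝ) (hEstar_meas : Measurable Estar) (hEhat_meas : Measurable Ehat)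
    (hEstar_nonneg : ∀ y, 0 ≤ Estar y)
    (ξ : ℝ) (hξ_pos : 0 < ξ) (hξ_lt : ξ < Real.log 2)
    (happrox : ∀ y, |Estar y - Ehat y| < ξ)
    (hZstar_int : Integrable (fun y => Real.exp (-Estar y)) μ)
    (hZstar_pos : 0 < ∫ y, Real.exp (-Estar y) ∂μ) :
    ∀ y, |Real.exp (-Estar y) / (∫ y', Real.exp (-Estar y') ∂μ)
        - Real.exp (-Ehat y) / (∫ y', Real.exp (-Ehat y') ∂μ)|
      ≤ 2 * (Real.exp ξ - 1)
        / ((2 - Real.exp ξ) * ∫ y', Real.exp (-Estar y') ∂μ) := by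
  have ht1 : 1 < Real.exp ξ := Real.one_lt_exp_iff.mpr hξ_pos
  have ht2 : Real.exp ξ < 2 := (Real.lt_log_iff_exp_lt (by norm_num)).mp hξ_lt
  have h1 : ∀ y, Real.exp (-Estar y) ≤ Real.exp ξ * Real.exp (-Ehat y) := by
    intro y
    rw [← Real.exp_add]
    apply Real.exp_le_exp.mpr
    have := (abs_lt.mp (happrox y)).1
    linarith
  have h2 : ∀ y, Real.exp (-Ehat y) ≤ Real.exp ξ * Real.exp (-Estar y) := by
    intro y
    rw [← Real.exp_add]
    apply Real.exp_le_exp.mpr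
    have := (abs_lt.mp (happrox y)).2
    linarith
  have hint : Integrable (fun y => Real.exp (-Ehat y)) μ := by
    refine (hZstar_int.const_mul (Real.exp ξ)).mono'
      (Real.measurable_exp.comp hEhat_meas.neg).aestronglyMeasurable ?_
    refine Filter.Eventually.of_forall fun y => ?_
    rw [Real.norm_eq_abs, abs_of_pos (Real.exp_pos _)]
    exact h2 y
  have hZ1 : ∫ y, Real.exp (-Estar y) ∂μ ≤ Real.exp ξ * ∫ y, Real.exp (-Ehat y) ∂μ := by
    rw [← integral_const_mul]
    exact integral_mono hZstar_int (hint.const_mul _) h1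
  have hZ2 : ∫ y, Real.exp (-Ehat y) ∂μ ≤ Real.exp ξ * ∫ y, Real.exp (-Estar y) ∂μ := by
    rw [← integral_const_mul]
    exact integral_mono hint (hZstar_int.const_mul _) h2
  intro y
  have ha1 : Real.exp (-Estar y) ≤ 1 := Real.exp_le_one_iff.mpr (by linarith [hEstar_nonneg y])
  have ha0 := Real.exp_pos (-Estar y)
  have hb0 := Real.exp_pos (-Ehat y)
  have hy1 := h1 y
  have hy2 := h2 y
  generalize (∫ y, Real.exp (-Estar y) ∂μ) = Z at *
  generalize (∫ y, Real.exp (-Ehat y) ∂μ) = W at *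
  generalize Real.exp (-Estar y) = a at *
  generalize Real.exp (-Ehat y) = b at *
  generalize Real.exp ξ = t at *
  have ht0 : 0 < t := by linarith
  have hW : 0 < W := pos_of_mul_pos_right (hZstar_pos.trans_le hZ1) ht0.le
  have hu : b * Z ≤ t ^ 2 * a * W := by
    calc b * Z ≤ (t * a) * (t * W) := by gcongr
      _ = _ := by ring
  have hl : a * W ≤ t ^ 2 * (b * Z) := by
    calc a * W ≤ (t * b) * (t * Z) := by gcongr
      _ = _ := by ring
  have haW : a * W ≤ W := by nlinarith
  have htt : 0 < t ^ 2 - 1 := by nlinarith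
  have hA : |a / Z - b / W| ≤ (t ^ 2 - 1) / Z := by
    have e : a / Z - b / W = ((a * W - b * Z) / W) / Z := by field_simp
    rw [e, abs_div, abs_of_pos hZstar_pos, abs_div, abs_of_pos hW]
    gcongr
    rw [div_le_iff₀ hW, abs_le]
    have k1 : (t ^ 2 - 1) * (a * W) ≤ (t ^ 2 - 1) * W := by gcongr
    constructor
    · nlinarith
    · by_cases hc : a * W ≤ b * Z
      · have := mul_pos htt hW
        linarith
      · have k2 : (t ^ 2 - 1) * (b * Z) ≤ (t ^ 2 - 1) * (a * W) :=
          mul_le_mul_of_nonneg_left (not_le.mp hc).le htt.le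
        nlinarith
  refine hA.trans ?_
  rw [← div_div]
  gcongr
  rw [le_div_iff₀ (by linarith)]
  nlinarith [mul_pos (sub_pos.mpr ht1) (mul_pos ht0 (sub_pos.mpr ht1))]
end

section
/- Let (Y, dy) be a σ-finite measure space, β > 0, ρ : X × Y → [0,∞) a distortion measure, and M > 0 with ∫_Y e^{-βρ(x,y)} dy < M for every x ∈ X. Let E*, Ê : Y → ℝ be measurable with E*(y) ≥ 0 for all y, let 0 < ξ < log 2 satisfy |E*(y) − Ê(y)| < ξ for all y ∈ Y, and suppose Z* = ∫_Y e^{-E*(y)} dy ∈ (0, ∞). Let q* and q̂ be the Boltzmann densities of E* and Ê respectively. Then for every x ∈ X, | ∫_Y q*(y) e^{-βρ(x,y)} dy − ∫_Y q̂(y) e^{-βρ(x,y)} dy | ≤ 2M(e^{ξ} − 1) / ((2 − e^{ξ}) Z*). -/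
open MeasureTheory

/-- Under the standing assumption `∫ e^{-βρ(x,y)} dμ(y) < M` for all `x`,
with `E* ≥ 0`, `0 < ξ < log 2`, `|E* − Ê| < ξ` pointwise and `Z* = ∫ e^{-E*} dμ ∈ (0,∞)`,
the Boltzmann densities `q*`, `q̂` of `E*`, `Ê` satisfy, for every `x`,
`|∫ q*(y)e^{-βρ(x,y)}dμ(y) − ∫ q̂(y)e^{-βρ(x,y)}dμ(y)| ≤ 2M(e^ξ − 1)/((2 − e^ξ)·Z*)`. -/
theorem inner_integral_perturbation
    {X Y : Type*} [MeasurableSpace Y] (μ : Measure Y) [SigmaFinite μ]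
    (β : ℝ) (hβ : 0 < β)
    (ρ : X → Y → ℝ) (hρ : ∀ x y, 0 ≤ ρ x y)
    (M : ℝ) (hM : 0 < M)
    (hρ_int : ∀ x, Integrable (fun y => Real.exp (-(β * ρ x y))) μ)
    (hρ_bound : ∀ x, (∫ y, Real.exp (-(β * ρ x y)) ∂μ) < M)
    (Estar Ehat : Y → ℝ) (hEstar_meas : Measurable Estar) (hEhat_meas : Measurable Ehat)
    (hEstar_nonneg : ∀ y, 0 ≤ Estar y)
    (ξ : ℝ) (hξ_pos : 0 < ξ) (hξ_lt : ξ < Real.log 2)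
    (happrox : ∀ y, |Estar y - Ehat y| < ξ)
    (hZstar_int : Integrable (fun y => Real.exp (-Estar y)) μ)
    (hZstar_pos : 0 < ∫ y, Real.exp (-Estar y) ∂μ) :
    ∀ x, |(∫ y, (Real.exp (-Estar y) / (∫ y', Real.exp (-Estar y') ∂μ))
            * Real.exp (-(β * ρ x y)) ∂μ)
        - ∫ y, (Real.exp (-Ehat y) / (∫ y', Real.exp (-Ehat y') ∂μ))
            * Real.exp (-(β * ρ x y)) ∂μ|
      ≤ 2 * M * (Real.exp ξ - 1)
        / ((2 - Real.exp ξ) * ∫ y', Real.exp (-Estar y') ∂μ) := by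
  intro x
  have h2 : Real.exp ξ < 2 := by
    have h := Real.exp_lt_exp.2 hξ_lt
    rwa [Real.exp_log (by norm_num)] at h
  have h1 : 1 < Real.exp ξ := Real.one_lt_exp_iff.2 hξ_pos
  have hinv : 2 - Real.exp ξ ≤ Real.exp (-ξ) := by
    have h3 : Real.exp ξ * Real.exp (-ξ) = 1 := by rw [← Real.exp_add]; simp
    nlinarith [Real.exp_pos (-ξ), sq_nonneg (Real.exp ξ - 1)]
  have hup : ∀ y, Real.exp (-Ehat y) ≤ Real.exp ξ * Real.exp (-Estar y) := by
    intro y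
    rw [← Real.exp_add]
    apply Real.exp_le_exp.2
    have := (abs_lt.1 (happrox y)).2
    have := (abs_lt.1 (happrox y)).1
    linarith
  have hlo : ∀ y, (2 - Real.exp ξ) * Real.exp (-Estar y) ≤ Real.exp (-Ehat y) := by
    intro y
    refine (mul_le_mul_of_nonneg_right hinv (Real.exp_pos _).le).trans ?_
    rw [← Real.exp_add]
    apply Real.exp_le_exp.2
    have := (abs_lt.1 (happrox y)).2
    have := (abs_lt.1 (happrox y)).1
    linarith
  have hZi : Integrable (fun y => Real.exp (-Ehat y)) μ := by
    refine (hZstar_int.const_mul (Real.exp ξ)).mono' hEhat_meas.neg.exp.aestronglyMeasurable ?_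
    refine Filter.Eventually.of_forall fun y => ?_
    rw [Real.norm_eq_abs, abs_of_pos (Real.exp_pos _)]
    exact hup y
  have hk1 : ∀ y, Real.exp (-(β * ρ x y)) ≤ 1 := by
    intro y
    apply Real.exp_le_one_iff.2
    have := mul_nonneg hβ.le (hρ x y)
    linarith
  have hAi : Integrable (fun y => Real.exp (-Estar y) * Real.exp (-(β * ρ x y))) μ := by
    refine hZstar_int.mono' (hZstar_int.1.mul (hρ_int x).1) ?_
    refine Filter.Eventually.of_forall fun y => ?_
    rw [Real.norm_eq_abs, abs_of_pos (by positivity)]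
    exact mul_le_of_le_one_right (Real.exp_pos _).le (hk1 y)
  have hBi : Integrable (fun y => Real.exp (-Ehat y) * Real.exp (-(β * ρ x y))) μ := by
    refine hZi.mono' (hZi.1.mul (hρ_int x).1) ?_
    refine Filter.Eventually.of_forall fun y => ?_
    rw [Real.norm_eq_abs, abs_of_pos (by positivity)]
    exact mul_le_of_le_one_right (Real.exp_pos _).le (hk1 y)
  have hZ1 : (∫ y, Real.exp (-Ehat y) ∂μ) ≤ Real.exp ξ * ∫ y, Real.exp (-Estar y) ∂μ := by
    rw [← integral_const_mul]
    exact integral_mono hZi (hZstar_int.const_mul _) hup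
  have hZ2 : (2 - Real.exp ξ) * (∫ y, Real.exp (-Estar y) ∂μ) ≤ ∫ y, Real.exp (-Ehat y) ∂μ := by
    rw [← integral_const_mul]
    exact integral_mono (hZstar_int.const_mul _) hZi hlo
  have hB1 : (∫ y, Real.exp (-Ehat y) * Real.exp (-(β * ρ x y)) ∂μ)
      ≤ Real.exp ξ * ∫ y, Real.exp (-Estar y) * Real.exp (-(β * ρ x y)) ∂μ := by
    rw [← integral_const_mul]
    refine integral_mono hBi (hAi.const_mul _) fun y => ?_
    have := mul_le_mul_of_nonneg_right (hup y) (Real.exp_pos (-(β * ρ x y))).le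
    simpa only [mul_assoc] using this
  have hB2 : (2 - Real.exp ξ) * (∫ y, Real.exp (-Estar y) * Real.exp (-(β * ρ x y)) ∂μ)
      ≤ ∫ y, Real.exp (-Ehat y) * Real.exp (-(β * ρ x y)) ∂μ := by
    rw [← integral_const_mul]
    refine integral_mono (hAi.const_mul _) hBi fun y => ?_
    have := mul_le_mul_of_nonneg_right (hlo y) (Real.exp_pos (-(β * ρ x y))).le
    simpa only [mul_assoc] using this
  have hAM : (∫ y, Real.exp (-Estar y) * Real.exp (-(β * ρ x y)) ∂μ) ≤ M := by
    refine (integral_mono hAi (hρ_int x) fun y => ?_).trans (hρ_bound x).le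
    refine mul_le_of_le_one_left (Real.exp_pos _).le (Real.exp_le_one_iff.2 ?_)
    linarith [hEstar_nonneg y]
  have hA0 : 0 ≤ ∫ y, Real.exp (-Estar y) * Real.exp (-(β * ρ x y)) ∂μ :=
    integral_nonneg fun y => by positivity
  simp only [div_mul_eq_mul_div, integral_div]
  generalize (∫ y, Real.exp (-Estar y) * Real.exp (-(β * ρ x y)) ∂μ) = A at *
  generalize (∫ y, Real.exp (-Ehat y) * Real.exp (-(β * ρ x y)) ∂μ) = B at *
  generalize (∫ y, Real.exp (-Estar y) ∂μ) = Z at *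
  generalize (∫ y, Real.exp (-Ehat y) ∂μ) = W at *
  generalize Real.exp ξ = e at *
  have hd : 0 < (2 - e) * Z := mul_pos (by linarith) hZstar_pos
  have hW : 0 < W := hd.trans_le hZ2
  have key : |A / Z - B / W| ≤ 2 * A * (e - 1) / W := by
    have h : A / Z - B / W = (A * (W - Z) + Z * (A - B)) / (Z * W) := by
      field_simp
      ring
    have h' : 2 * A * (e - 1) / W = (A * ((e - 1) * Z) + Z * ((e - 1) * A)) / (Z * W) := by
      field_simp
      ring
    rw [h, h', abs_div, abs_of_pos (mul_pos hZstar_pos hW)]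
    apply div_le_div_of_nonneg_right _ (mul_pos hZstar_pos hW).le
    refine (abs_add_le _ _).trans ?_
    rw [abs_mul, abs_mul, abs_of_nonneg hA0, abs_of_pos hZstar_pos]
    have e1 : |W - Z| ≤ (e - 1) * Z := abs_le.2 ⟨by linarith, by linarith⟩
    have e2 : |A - B| ≤ (e - 1) * A := abs_le.2 ⟨by linarith, by linarith⟩
    gcongr
  refine key.trans ?_
  have : 0 ≤ e - 1 := by linarith
  gcongr
end
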